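/- Let q and q' be nondegenerate quadratic forms on finite-dimensional vector spaces V and V' over the field F_2 with two elements, with dim V = dim V'. Then q and q' are isometric (there is an F_2-linear isomorphism σ : V → V' with q'(σ(x)) = q(x) for all x) if and only if the number of elements x ∈ V with q(x) = 1 equals the number of elements x' ∈ V' with q'(x') = 1. Equivalently, nondegenerate quadratic forms over F_2 are classified up to isometry by their dimension together with their Arf invariant. -/

import Mathlib

open QuadraticMap

/-!
Every isotropic vector outside the radical spans, with a suitable partner, a hyperbolic plane that
splits off as an orthogonal summand. This does not change the radical up to isomorphism, and the
number `N` of ones of the complement `W` is recovered from `2 * N + |W|`, the number of ones of the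
whole form. So one may cancel hyperbolic planes from both forms until one of them has no isotropic
vector outside its radical. That form is the indicator function of the complement of its radical,
and by counting so is the other one; an isomorphism matching the radicals is then an isometry.
-/

section HyperbolicPair

variable {R M : Type*} [CommRing R] [AddCommGroup M] [Module R M]

variable (R) in
/-- The hyperbolic plane over `R`, written as the form `(a, b) ↦ a * b` in the coordinates given
by a hyperbolic pair, so that it makes sense in every characteristic. -/
def hyperbolicPlane : QuadraticForm R (R × R) :=
  linMulLin (LinearMap.fst R R R) (LinearMap.snd R R R)

/-- A hyperbolic pair for `q`: two isotropic vectors whose polar product is `1`. -/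
structure IsHyperbolicPair (q : QuadraticForm R M) (x y : M) : Prop where
  left_isotropic : q x = 0
  right_isotropic : q y = 0
  polar_eq_one : polar q x y = 1

theorem IsHyperbolicPair.of_polar_eq_one {q : QuadraticForm R M} {x y : M}
    (hx : q x = 0) (hxy : polar q x y = 1) : IsHyperbolicPair q x (y - q y • x) where
  left_isotropic := hx
  right_isotropic := by
    rw [sub_eq_add_neg, ← neg_smul, QuadraticMap.map_add q, QuadraticMap.map_smul, hx,
      polar_smul_right, polar_comm, hxy]
    simp
  polar_eq_one := by
    rw [polar_sub_right, polar_smul_right, polar_self, hx, hxy]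
    simp

/-- The orthogonal complement of `{x, y}` with respect to the polar form of `q`. -/
def pairOrthogonal (q : QuadraticForm R M) (x y : M) : Submodule R M :=
  LinearMap.ker (polarBilin q x) ⊓ LinearMap.ker (polarBilin q y)

theorem mem_pairOrthogonal {q : QuadraticForm R M} {x y v : M} :
    v ∈ pairOrthogonal q x y ↔ polar q x v = 0 ∧ polar q y v = 0 :=
  Iff.rfl

namespace IsHyperbolicPair

variable {q : QuadraticForm R M} {x y : M}

theorem polar_left_combination (h : IsHyperbolicPair q x y) (a b : R)
    (w : pairOrthogonal q x y) : polar q x (a • x + b • y + w) = b := by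
  simp [polar_add_right, h.left_isotropic, h.polar_eq_one, (mem_pairOrthogonal.1 w.2).1]

theorem polar_right_combination (h : IsHyperbolicPair q x y) (a b : R)
    (w : pairOrthogonal q x y) : polar q y (a • x + b • y + w) = a := by
  simp [polar_add_right, h.right_isotropic, polar_comm q y x, h.polar_eq_one,
    (mem_pairOrthogonal.1 w.2).2]

theorem map_combination (h : IsHyperbolicPair q x y) (a b : R) (w : pairOrthogonal q x y) :
    q (a • x + b • y + w) = a * b + q w := by
  obtain ⟨hxw, hyw⟩ := mem_pairOrthogonal.1 w.2
  simp [QuadraticMap.map_add q, QuadraticMap.map_smul, polar_add_left, h.left_isotropic,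
    h.right_isotropic, h.polar_eq_one, hxw, hyw, mul_comm]

theorem sub_mem_pairOrthogonal (h : IsHyperbolicPair q x y) (v : M) :
    v - (polar q y v • x + polar q x v • y) ∈ pairOrthogonal q x y := by
  simp [mem_pairOrthogonal, polar_sub_right, polar_add_right, h.left_isotropic, h.right_isotropic,
    polar_comm q y x, h.polar_eq_one]

/-- The splitting of `q` into the hyperbolic plane spanned by a hyperbolic pair and its
orthogonal complement. -/
def isometryEquiv (h : IsHyperbolicPair q x y) :
    ((hyperbolicPlane R).prod (q.restrict (pairOrthogonal q x y))).IsometryEquiv q where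
  toLinearMap :=
    ((LinearMap.toSpanSingleton R M x).coprod (LinearMap.toSpanSingleton R M y)).coprod
      (pairOrthogonal q x y).subtype
  invFun v := ((polar q y v, polar q x v), ⟨_, h.sub_mem_pairOrthogonal v⟩)
  left_inv := by
    rintro ⟨⟨a, b⟩, w⟩
    simp [h.polar_left_combination, h.polar_right_combination]
  right_inv v := by simp
  map_app' := by
    rintro ⟨⟨a, b⟩, w⟩
    exact h.map_combination a b w

end IsHyperbolicPair

theorem exists_hyperbolicPlane_prod_equivalent {K V : Type*} [Field K] [AddCommGroup V]
    [Module K V] {q : QuadraticForm K V} {x : V} (hx : q x = 0) (hx_rad : x ∉ q.radical) :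
    ∃ W : Submodule K V, ((hyperbolicPlane K).prod (q.restrict W)).Equivalent q := by
  obtain ⟨z, hz⟩ : ∃ z, polar q x z ≠ 0 := by
    by_contra! h
    exact hx_rad ⟨hx, LinearMap.ext h⟩
  have hxz : polar q x ((polar q x z)⁻¹ • z) = 1 := by
    rw [polar_smul_right, smul_eq_mul, inv_mul_cancel₀ hz]
  exact ⟨_, ⟨(IsHyperbolicPair.of_polar_eq_one hx hxz).isometryEquiv⟩⟩

theorem finrank_of_hyperbolicPlane_prod_equivalent [Nontrivial R] {N : Type*}
    [AddCommGroup N] [Module R N] [Module.Free R N] [Module.Finite R N]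
    {p : QuadraticForm R N} {q : QuadraticForm R M}
    (h : ((hyperbolicPlane R).prod p).Equivalent q) :
    Module.finrank R M = Module.finrank R N + 2 := by
  obtain ⟨e⟩ := h
  rw [← e.toLinearEquiv.finrank_eq, Module.finrank_prod, Module.finrank_prod, Module.finrank_self]
  ring

end HyperbolicPair

section Radical

variable {R M N P : Type*} [CommRing R] [AddCommGroup M] [Module R M] [AddCommGroup N] [Module R N]
  [AddCommGroup P] [Module R P]

theorem radical_eq_bot_of_separatingLeft {q : QuadraticMap R M P}
    (hq : (polarBilin q).SeparatingLeft) : q.radical = ⊥ :=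
  le_bot_iff.1 <|
    radical_le_ker_polarBilin.trans (LinearMap.separatingLeft_iff_ker_eq_bot.1 hq).le

theorem separatingLeft_polarBilin_hyperbolicPlane :
    (polarBilin (hyperbolicPlane R)).SeparatingLeft := by
  rintro ⟨a, b⟩ h
  have ha : a = 0 := by simpa [hyperbolicPlane, polar, mul_add] using h (0, 1)
  have hb : b = 0 := by simpa [hyperbolicPlane, polar, add_mul] using h (1, 0)
  rw [ha, hb, Prod.mk_zero_zero]

theorem radical_prod_of_separatingLeft {p : QuadraticMap R M P}
    (hp : (polarBilin p).SeparatingLeft) (q : QuadraticMap R N P) :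
    (p.prod q).radical = q.radical.map (LinearMap.inr R M N) := by
  ext ⟨a, b⟩
  constructor
  · rintro ⟨hab, hpolar⟩
    have ha : a = 0 := hp a fun m => by simpa using LinearMap.congr_fun hpolar (m, 0)
    subst ha
    refine ⟨b, ⟨by simpa using hab, LinearMap.ext fun n => ?_⟩, rfl⟩
    simpa using LinearMap.congr_fun hpolar (0, n)
  · rintro ⟨c, ⟨hc, hpolar⟩, hcb⟩
    obtain ⟨rfl, rfl⟩ := Prod.mk.inj hcb
    exact ⟨by simp [hc], by ext <;> simp [hpolar]⟩

theorem finrank_radical_hyperbolicPlane_prod (q : QuadraticForm R M) :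
    Module.finrank R ((hyperbolicPlane R).prod q).radical = Module.finrank R q.radical := by
  rw [radical_prod_of_separatingLeft separatingLeft_polarBilin_hyperbolicPlane]
  exact (Submodule.equivMapOfInjective _ LinearMap.inr_injective q.radical).finrank_eq.symm

end Radical

theorem exists_linearEquiv_mem_iff {K V V' : Type*} [DivisionRing K]
    [AddCommGroup V] [Module K V] [AddCommGroup V'] [Module K V']
    [FiniteDimensional K V] [FiniteDimensional K V']
    (hdim : Module.finrank K V = Module.finrank K V') {W : Submodule K V} {W' : Submodule K V'}
    (hW : Module.finrank K W = Module.finrank K W') :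
    ∃ σ : V ≃ₗ[K] V', ∀ x, σ x ∈ W' ↔ x ∈ W := by
  obtain ⟨C, hC⟩ := W.exists_isCompl
  obtain ⟨C', hC'⟩ := W'.exists_isCompl
  have hCC' : Module.finrank K C = Module.finrank K C' := by
    have := Submodule.finrank_add_eq_of_isCompl hC
    have := Submodule.finrank_add_eq_of_isCompl hC'
    lia
  refine ⟨(W.prodEquivOfIsCompl C hC).symm ≪≫ₗ
    (LinearEquiv.ofFinrankEq W W' hW).prodCongr (LinearEquiv.ofFinrankEq C C' hCC') ≪≫ₗ
    W'.prodEquivOfIsCompl C' hC', fun x => ?_⟩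
  rw [← W'.prodEquivOfIsCompl_symm_apply_snd_eq_zero C' hC',
    ← W.prodEquivOfIsCompl_symm_apply_snd_eq_zero C hC]
  simp

section Equivalent

variable {R M M' N : Type*} [CommSemiring R] [AddCommMonoid M] [AddCommMonoid M'] [AddCommMonoid N]
  [Module R M] [Module R M'] [Module R N] {q : QuadraticMap R M N} {q' : QuadraticMap R M' N}

theorem equivalent_iff_exists_linearEquiv :
    q.Equivalent q' ↔ ∃ σ : M ≃ₗ[R] M', ∀ x, q' (σ x) = q x where
  mp := fun ⟨σ⟩ => ⟨σ.toLinearEquiv, σ.map_app'⟩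
  mpr := fun ⟨σ, hσ⟩ => ⟨⟨σ, hσ⟩⟩

theorem card_fiber_eq_of_equivalent (h : q.Equivalent q') (c : N) :
    Nat.card {x // q x = c} = Nat.card {x // q' x = c} := by
  obtain ⟨σ⟩ := h
  exact Nat.card_congr (σ.toEquiv.subtypeEquiv fun x => by rw [← σ.map_app x]; rfl)

end Equivalent

section Counting

theorem mem_radical_of_card_zeros_eq {K V V' : Type*} [Field K] [Finite K]
    [AddCommGroup V] [Module K V] [AddCommGroup V'] [Module K V']
    [FiniteDimensional K V] [FiniteDimensional K V']
    {q : QuadraticForm K V} {q' : QuadraticForm K V'}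
    (hrad : Module.finrank K q.radical = Module.finrank K q'.radical)
    (hcard : Nat.card {x // q x = 0} = Nat.card {x // q' x = 0})
    (hq : ∀ x, q x = 0 → x ∈ q.radical) {x : V'} (hx : q' x = 0) : x ∈ q'.radical := by
  have : Finite V' := Module.finite_of_finite K
  have hzeros : {x | q x = 0} = (q.radical : Set V) := Set.ext fun x => ⟨hq x, And.left⟩
  have hncard : {x | q' x = 0}.ncard = (q'.radical : Set V').ncard := calc
    {x | q' x = 0}.ncard = {x | q x = 0}.ncard := hcard.symm
    _ = Nat.card q.radical := congrArg Set.ncard hzeros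
    _ = Nat.card q'.radical := Nat.card_congr (LinearEquiv.ofFinrankEq _ _ hrad).toEquiv
    _ = (q'.radical : Set V').ncard := rfl
  have hzeros' : (q'.radical : Set V') = {x | q' x = 0} :=
    Set.eq_of_subset_of_ncard_le (fun x => And.left) hncard.le
  exact hzeros'.ge hx

theorem card_zeros_add_card_ones {α : Type*} [Finite α] (f : α → ZMod 2) :
    Nat.card {x // f x = 0} + Nat.card {x // f x = 1} = Nat.card α := by
  rw [← Nat.card_congr (Equiv.sigmaFiberEquiv f), Nat.card_sigma]
  exact (Fin.sum_univ_two fun a : ZMod 2 => Nat.card {x // f x = a}).symm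

theorem card_zeros_eq_of_card_ones_eq {α β : Type*} [Finite α] [Finite β]
    {f : α → ZMod 2} {g : β → ZMod 2} (hαβ : Nat.card α = Nat.card β)
    (hcard : Nat.card {x // f x = 1} = Nat.card {x // g x = 1}) :
    Nat.card {x // f x = 0} = Nat.card {x // g x = 0} := by
  have := card_zeros_add_card_ones f
  have := card_zeros_add_card_ones g
  lia

variable {V V' : Type*} [AddCommGroup V] [Module (ZMod 2) V] [AddCommGroup V'] [Module (ZMod 2) V']

theorem card_ones_hyperbolicPlane_prod [Finite V] (q : QuadraticForm (ZMod 2) V) :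
    Nat.card {p // (hyperbolicPlane (ZMod 2)).prod q p = 1} =
      2 * Nat.card {x // q x = 1} + Nat.card V := by
  have fiberwise : {p // (hyperbolicPlane (ZMod 2)).prod q p = 1} ≃
      Σ p : ZMod 2 × ZMod 2, {x // p.1 * p.2 + q x = 1} :=
    Equiv.subtypeProdEquivSigmaSubtype fun (p : ZMod 2 × ZMod 2) x => p.1 * p.2 + q x = 1
  have sum_eq (f : ZMod 2 → ℕ) : ∑ a, f a = f 0 + f 1 := Fin.sum_univ_two f
  rw [Nat.card_congr fiberwise, Nat.card_sigma, Fintype.sum_prod_type]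
  simp only [sum_eq, mul_zero, mul_one, zero_add, add_eq_left]
  rw [← card_zeros_add_card_ones q]
  ring

theorem card_ones_of_hyperbolicPlane_prod_equivalent [Finite V] {p : QuadraticForm (ZMod 2) V}
    {q : QuadraticForm (ZMod 2) V'} (h : ((hyperbolicPlane (ZMod 2)).prod p).Equivalent q) :
    Nat.card {x // q x = 1} = 2 * Nat.card {x // p x = 1} + Nat.card V := by
  rw [← card_fiber_eq_of_equivalent h 1, card_ones_hyperbolicPlane_prod]

theorem equivalent_of_zero_iff {q : QuadraticForm (ZMod 2) V} {q' : QuadraticForm (ZMod 2) V'}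
    (σ : V ≃ₗ[ZMod 2] V') (hσ : ∀ x, q' (σ x) = 0 ↔ q x = 0) : q.Equivalent q' := by
  have eq_of_zero_iff : ∀ a b : ZMod 2, (a = 0 ↔ b = 0) → a = b := by decide
  exact ⟨⟨σ, fun x => eq_of_zero_iff _ _ (hσ x)⟩⟩

variable [FiniteDimensional (ZMod 2) V] [FiniteDimensional (ZMod 2) V']
  {q : QuadraticForm (ZMod 2) V} {q' : QuadraticForm (ZMod 2) V'}

theorem equivalent_of_isotropic_mem_radical
    (hdim : Module.finrank (ZMod 2) V = Module.finrank (ZMod 2) V')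
    (hrad : Module.finrank (ZMod 2) q.radical = Module.finrank (ZMod 2) q'.radical)
    (hcard : Nat.card {x // q x = 1} = Nat.card {x // q' x = 1})
    (hq : ∀ x, q x = 0 → x ∈ q.radical) : q.Equivalent q' := by
  have : Finite V := Module.finite_of_finite (ZMod 2)
  have : Finite V' := Module.finite_of_finite (ZMod 2)
  have hVV' : Nat.card V = Nat.card V' :=
    Nat.card_congr (LinearEquiv.ofFinrankEq V V' hdim).toEquiv
  have hq' : ∀ x, q' x = 0 → x ∈ q'.radical := fun _ =>
    mem_radical_of_card_zeros_eq hrad (card_zeros_eq_of_card_ones_eq hVV' hcard) hq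
  obtain ⟨σ, hσ⟩ := exists_linearEquiv_mem_iff hdim hrad
  refine equivalent_of_zero_iff σ fun x => ?_
  calc q' (σ x) = 0 ↔ σ x ∈ q'.radical := ⟨hq' _, And.left⟩
    _ ↔ x ∈ q.radical := hσ x
    _ ↔ q x = 0 := ⟨And.left, hq x⟩

theorem equivalent_of_card_ones_eq
    (hdim : Module.finrank (ZMod 2) V = Module.finrank (ZMod 2) V')
    (hrad : Module.finrank (ZMod 2) q.radical = Module.finrank (ZMod 2) q'.radical)
    (hcard : Nat.card {x // q x = 1} = Nat.card {x // q' x = 1}) : q.Equivalent q' := by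
  induction hn : Module.finrank (ZMod 2) V using Nat.strong_induction_on generalizing V V' with
  | _ n ih =>
  by_cases hq : ∀ x, q x = 0 → x ∈ q.radical
  · exact equivalent_of_isotropic_mem_radical hdim hrad hcard hq
  by_cases hq' : ∀ x, q' x = 0 → x ∈ q'.radical
  · exact (equivalent_of_isotropic_mem_radical hdim.symm hrad.symm hcard.symm hq').symm
  push Not at hq hq'
  obtain ⟨x, hx, hx_rad⟩ := hq
  obtain ⟨x', hx', hx'_rad⟩ := hq'
  obtain ⟨W, hW⟩ := exists_hyperbolicPlane_prod_equivalent hx hx_rad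
  obtain ⟨W', hW'⟩ := exists_hyperbolicPlane_prod_equivalent hx' hx'_rad
  have hdimW := finrank_of_hyperbolicPlane_prod_equivalent hW
  have hdimW' := finrank_of_hyperbolicPlane_prod_equivalent hW'
  have hradW := hW.rank_radical_eq
  have hradW' := hW'.rank_radical_eq
  rw [finrank_radical_hyperbolicPlane_prod] at hradW hradW'
  have : Finite V := Module.finite_of_finite (ZMod 2)
  have : Finite V' := Module.finite_of_finite (ZMod 2)
  have hcardW := card_ones_of_hyperbolicPlane_prod_equivalent hW
  have hcardW' := card_ones_of_hyperbolicPlane_prod_equivalent hW'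
  have hWW' : Module.finrank (ZMod 2) W = Module.finrank (ZMod 2) W' := by lia
  have hcardWW' : Nat.card W = Nat.card W' :=
    Nat.card_congr (LinearEquiv.ofFinrankEq W W' hWW').toEquiv
  have hequiv : (q.restrict W).Equivalent (q'.restrict W') :=
    ih (Module.finrank (ZMod 2) W) (by lia) hWW' (by lia) (by lia) rfl
  exact hW.symm.trans (((Equivalent.refl _).prod hequiv).trans hW')

end Counting

theorem isometric_iff_card_ones_eq_general
    {V V' : Type*} [AddCommGroup V] [Module (ZMod 2) V]
    [AddCommGroup V'] [Module (ZMod 2) V']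
    [FiniteDimensional (ZMod 2) V] [FiniteDimensional (ZMod 2) V']
    (q : QuadraticForm (ZMod 2) V) (q' : QuadraticForm (ZMod 2) V')
    (hdim : Module.finrank (ZMod 2) V = Module.finrank (ZMod 2) V')
    (hrad : Module.finrank (ZMod 2) q.radical = Module.finrank (ZMod 2) q'.radical) :
    (∃ σ : V ≃ₗ[ZMod 2] V', ∀ x : V, q' (σ x) = q x) ↔
      Nat.card {x : V // q x = 1} = Nat.card {x' : V' // q' x' = 1} := by
  rw [← equivalent_iff_exists_linearEquiv]
  exact ⟨fun h => card_fiber_eq_of_equivalent h 1, equivalent_of_card_ones_eq hdim hrad⟩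

/-- Nondegenerate quadratic forms over the two-element field `F₂` on spaces of the same
finite dimension are isometric if and only if they take the value `1` equally often;
i.e. they are classified up to isometry by dimension together with the Arf invariant. -/
theorem isometric_iff_card_ones_eq
    {V V' : Type*} [AddCommGroup V] [Module (ZMod 2) V]
    [AddCommGroup V'] [Module (ZMod 2) V']
    [FiniteDimensional (ZMod 2) V] [FiniteDimensional (ZMod 2) V']
    (q : QuadraticForm (ZMod 2) V) (q' : QuadraticForm (ZMod 2) V')
    (hq : (polarBilin q).Nondegenerate) (hq' : (polarBilin q').Nondegenerate)
    (hdim : Module.finrank (ZMod 2) V = Module.finrank (ZMod 2) V') :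
    (∃ σ : V ≃ₗ[ZMod 2] V', ∀ x : V, q' (σ x) = q x) ↔
      Nat.card {x : V // q x = 1} = Nat.card {x' : V' // q' x' = 1} := by
  exact isometric_iff_card_ones_eq_general q q' hdim <| by
    rw [radical_eq_bot_of_separatingLeft hq.1, radical_eq_bot_of_separatingLeft hq'.1,
      finrank_bot, finrank_bot]
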